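/- arXiv:1303.2388 — 2 statements merged into one kernel-verified Lean document; each statement's English description precedes it below -/
import Mathlib

section
/- Weak duality for finite-horizon Markov decision processes: let M : 𝒜^K × 𝒱^K → ℝ be a dual feasible penalty, and assume that for the fixed initial state x the map v ↦ sup_{a ∈ 𝒜^K} (R(a, v) − M(a, v)) is measurable and integrable with respect to μ^{⊗K}. Then the optimal value over nonanticipative policies satisfies sup_{nonanticipative a} 𝔼_{v ∼ μ^{⊗K}}[R(a(v), v)] ≤ 𝔼_{v ∼ μ^{⊗K}}[ sup_{a ∈ 𝒜^K} ( R(a, v) − M(a, v) ) ]. -/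
open MeasureTheory

/-- The controlled trajectory of a finite-horizon MDP: `x_0 = x`,
`x_{k+1} = f x_k a_k v_{k+1}` for `k < K` (constant after time `K`). -/
def mdpTraj {X A V : Type*} (f : X → A → V → X) (K : ℕ) (x : X)
    (a : Fin K → A) (v : Fin K → V) : ℕ → X
  | 0 => x
  | n + 1 =>
    if h : n < K then f (mdpTraj f K x a v n) (a ⟨n, h⟩) (v ⟨n, h⟩)
    else mdpTraj f K x a v n

/-- Total reward `Σ_{k=0}^{K-1} g_k(x_k, a_k) + Λ(x_K)` of the action sequence `a`
under the noise realization `v`, starting from `x`. -/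
def mdpReward {X A V : Type*} (f : X → A → V → X) (K : ℕ)
    (g : ℕ → X → A → ℝ) (Λ : X → ℝ) (x : X) (a : Fin K → A) (v : Fin K → V) : ℝ :=
  (∑ k : Fin K, g k (mdpTraj f K x a v k) (a k)) + Λ (mdpTraj f K x a v K)

/-- A nonanticipative policy: each `p k` is a measurable function of the noise that
depends only on the noises `v_1, …, v_k` (indices `j < k`); in particular the time-0
action is deterministic. -/
def Nonanticipative {A V : Type*} [MeasurableSpace A] [MeasurableSpace V] (K : ℕ)
    (p : Fin K → (Fin K → V) → A) : Prop :=
  (∀ k, Measurable (p k)) ∧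
  ∀ (k : Fin K) (v v' : Fin K → V),
    (∀ j : Fin K, (j : ℕ) < (k : ℕ) → v j = v' j) → p k v = p k v'

section InformationRelaxation

variable {Ω α : Type*} {ι : Sort*} [MeasurableSpace Ω] {ν : Measure Ω}

/-- A penalty `M` is dual feasible for a family `π` of policies if its expectation along each of
them is nonpositive; subtracting it from the reward can then only raise a policy's value, while
charging for the use of information outside the family. The information available to a policy is
encoded only in the choice of the family. Integrability is part of the definition since the Bochner
integral of a non-integrable function is `0`. -/
def IsDualFeasible (ν : Measure Ω) (π : ι → Ω → α) (M : α → Ω → ℝ) : Prop :=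
  ∀ i, Integrable (fun ω => M (π i ω) ω) ν ∧ ∫ ω, M (π i ω) ω ∂ν ≤ 0

theorem integral_comp_le_integral_iSup {F : α → Ω → ℝ} {p : Ω → α}
    (hF : Integrable (fun ω => F (p ω) ω) ν)
    (hbdd : ∀ᵐ ω ∂ν, BddAbove (Set.range fun a => F a ω))
    (hsup : Integrable (fun ω => ⨆ a, F a ω) ν) :
    ∫ ω, F (p ω) ω ∂ν ≤ ∫ ω, ⨆ a, F a ω ∂ν :=
  integral_mono_ae hF hsup <| hbdd.mono fun ω hω => le_ciSup hω (p ω)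

theorem IsDualFeasible.integral_le_integral_sub {π : ι → Ω → α} {R M : α → Ω → ℝ}
    (hM : IsDualFeasible ν π M) {i : ι} (hR : Integrable (fun ω => R (π i ω) ω) ν) :
    ∫ ω, R (π i ω) ω ∂ν ≤ ∫ ω, (R (π i ω) ω - M (π i ω) ω) ∂ν := by
  obtain ⟨hMint, hMnonpos⟩ := hM i
  rw [integral_sub hR hMint]
  exact le_sub_self_iff _ |>.2 hMnonpos

theorem IsDualFeasible.integral_le_integral_iSup_sub {π : ι → Ω → α} {R M : α → Ω → ℝ}
    (hM : IsDualFeasible ν π M) {i : ι} (hR : Integrable (fun ω => R (π i ω) ω) ν)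
    (hbdd : ∀ᵐ ω ∂ν, BddAbove (Set.range fun a => R a ω - M a ω))
    (hsup : Integrable (fun ω => ⨆ a, (R a ω - M a ω)) ν) :
    ∫ ω, R (π i ω) ω ∂ν ≤ ∫ ω, ⨆ a, (R a ω - M a ω) ∂ν :=
  calc ∫ ω, R (π i ω) ω ∂ν
      ≤ ∫ ω, (R (π i ω) ω - M (π i ω) ω) ∂ν := hM.integral_le_integral_sub hR
    _ ≤ ∫ ω, ⨆ a, (R a ω - M a ω) ∂ν :=
        integral_comp_le_integral_iSup (F := fun a ω => R a ω - M a ω)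
          (hR.sub (hM i).1) hbdd hsup

theorem mdp_weak_duality_general [Nonempty ι] {π : ι → Ω → α} {R M : α → Ω → ℝ}
    (hM : IsDualFeasible ν π M) (hR : ∀ i, Integrable (fun ω => R (π i ω) ω) ν)
    (hbdd : ∀ᵐ ω ∂ν, BddAbove (Set.range fun a => R a ω - M a ω))
    (hsup : Integrable (fun ω => ⨆ a, (R a ω - M a ω)) ν) :
    (⨆ i, ∫ ω, R (π i ω) ω ∂ν) ≤ ∫ ω, ⨆ a, (R a ω - M a ω) ∂ν :=
  ciSup_le fun i => hM.integral_le_integral_iSup_sub (hR i) hbdd hsup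

end InformationRelaxation

section Nonanticipative

variable {A V : Type*} [MeasurableSpace A] [MeasurableSpace V] {K : ℕ}

theorem nonanticipative_const (a : Fin K → A) :
    Nonanticipative K fun k (_ : Fin K → V) => a k :=
  ⟨fun _ => measurable_const, fun _ _ _ _ => rfl⟩

instance Nonanticipative.instNonempty [Nonempty A] :
    Nonempty {p : Fin K → (Fin K → V) → A // Nonanticipative K p} :=
  ⟨⟨_, nonanticipative_const fun _ => Classical.arbitrary A⟩⟩

end Nonanticipative

/-- **Weak duality for finite-horizon Markov decision processes** (Theorem 1(a)).
If `M` is a dual feasible penalty (its expectation along every nonanticipative policy is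
`≤ 0`), and the pathwise relaxed reward `v ↦ sup_{a ∈ 𝒜^K} (R(a,v) - M(a,v))` is
(well-defined, measurable and) integrable w.r.t. the product noise law `μ^{⊗K}`, then the
optimal expected reward over nonanticipative policies is bounded above by
`𝔼_{v ∼ μ^{⊗K}}[sup_{a ∈ 𝒜^K} (R(a,v) - M(a,v))]`. -/
theorem mdp_weak_duality
    {X A V : Type*} [MeasurableSpace X] [MeasurableSpace A] [MeasurableSpace V]
    [Nonempty A]
    (μ : Measure V) [IsProbabilityMeasure μ]
    (K : ℕ) (hK : 1 ≤ K)
    (f : X → A → V → X) (hf : Measurable fun q : X × A × V => f q.1 q.2.1 q.2.2)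
    (g : ℕ → X → A → ℝ) (hg : ∀ k, Measurable fun q : X × A => g k q.1 q.2)
    (hgbd : ∃ C, ∀ k x a, |g k x a| ≤ C)
    (Λ : X → ℝ) (hΛ : Measurable Λ) (hΛbd : ∃ C, ∀ x, |Λ x| ≤ C)
    (x : X)
    (M : (Fin K → A) → (Fin K → V) → ℝ)
    (hMint : ∀ p : Fin K → (Fin K → V) → A, Nonanticipative K p →
      Integrable (fun v => M (fun k => p k v) v) (Measure.pi fun _ : Fin K => μ))
    (hMfeas : ∀ p : Fin K → (Fin K → V) → A, Nonanticipative K p →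
      (∫ v, M (fun k => p k v) v ∂(Measure.pi fun _ : Fin K => μ)) ≤ 0)
    (hRint : ∀ p : Fin K → (Fin K → V) → A, Nonanticipative K p →
      Integrable (fun v => mdpReward f K g Λ x (fun k => p k v) v)
        (Measure.pi fun _ : Fin K => μ))
    (hBdd : ∀ v : Fin K → V,
      BddAbove (Set.range fun a : Fin K → A => mdpReward f K g Λ x a v - M a v))
    (hSint : Integrable
      (fun v => ⨆ a : Fin K → A, (mdpReward f K g Λ x a v - M a v))
      (Measure.pi fun _ : Fin K => μ)) :
    (⨆ p : {p : Fin K → (Fin K → V) → A // Nonanticipative K p},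
        ∫ v, mdpReward f K g Λ x (fun k => p.1 k v) v ∂(Measure.pi fun _ : Fin K => μ))
      ≤ ∫ v, (⨆ a : Fin K → A, (mdpReward f K g Λ x a v - M a v))
          ∂(Measure.pi fun _ : Fin K => μ) :=
  mdp_weak_duality_general (fun p => ⟨hMint p.1 p.2, hMfeas p.1 p.2⟩) (fun p => hRint p.1 p.2)
    (.of_forall hBdd) hSint
end

section
/- Strong duality for finite-horizon Markov decision processes (Theorem 1(b)): assume V_0,…,V_K are bounded measurable functions satisfying the Bellman recursion V_K = Λ and V_k(x) = sup_{a ∈ 𝒜} { g_k(x, a) + ∫_𝒱 V_{k+1}(f(x, a, v')) μ(dv') } for k < K, and define the value-function-based penalty M*(a, v) := Σ_{k=0}^{K−1} ( V_{k+1}(x_{k+1}) − ∫_𝒱 V_{k+1}(f(x_k, a_k, v')) μ(dv') ). Then for every initial state x, 𝔼_{v ∼ μ^{⊗K}}[ sup_{a ∈ 𝒜^K} ( Σ_{k=0}^{K−1} g_k(x_k, a_k) + Λ(x_K) − M*(a, v) ) ] = V_0(x). -/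
/-!
The penalized reward `reward - M*` telescopes: along every trajectory it equals `W 0 x` plus the
sum of the advantages `g k x_k a_k + ∫ W (k + 1) (f x_k a_k ·) ∂μ - W k x_k`. By the Bellman
recursion each advantage has supremum zero over the actions, whatever the state, so no action
sequence exceeds `W 0 x`, and following a policy that is almost greedy at each state comes
arbitrarily close to it. The inner problem thus has the value `W 0 x` for each noise realization
separately, and the expectation is that of a constant.
-/

open MeasureTheory

/-- The value-function-based penalty
`M*(a,v) = Σ_{k=0}^{K-1} ( W_{k+1}(x_{k+1}) - ∫ W_{k+1}(f(x_k, a_k, v')) μ(dv') )`,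
where `x_k` is the trajectory generated from `x` by `(a, v)` and `W_k` are the
value functions. -/
noncomputable def MstarPenalty {X A V : Type*} [MeasurableSpace V] (f : X → A → V → X)
    (K : ℕ) (W : ℕ → X → ℝ) (μ : Measure V) (x : X) (a : Fin K → A) (v : Fin K → V) : ℝ :=
  ∑ k : Fin K,
    (W ((k : ℕ) + 1) (mdpTraj f K x a v ((k : ℕ) + 1)) -
      ∫ v', W ((k : ℕ) + 1) (f (mdpTraj f K x a v (k : ℕ)) (a k) v') ∂μ)

section Feedback

variable {X A V : Type*} (f : X → A → V → X) (K : ℕ) (x : X) (π : Fin K → X → A) (v : Fin K → V)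

/-- The closed-loop trajectory under the feedback policy `π`, encoded as the open-loop trajectory
of the MDP whose actions are the decision rules `X → A`. -/
def feedbackTraj : ℕ → X :=
  mdpTraj (fun y (d : X → A) ↦ f y (d y)) K x π v

/-- The actions chosen by the feedback policy `π` along its closed-loop trajectory; they turn a
policy into an open-loop action sequence for the noise realization `v`. -/
def feedbackActions (k : Fin K) : A :=
  π k (feedbackTraj f K x π v k)

lemma mdpTraj_feedbackActions (n : ℕ) :
    mdpTraj f K x (feedbackActions f K x π v) v n = feedbackTraj f K x π v n := by
  induction n with
  | zero => rfl
  | succ n ih => simp only [mdpTraj, ih, feedbackTraj, feedbackActions]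

lemma feedbackActions_eq_policy_mdpTraj (k : Fin K) :
    feedbackActions f K x π v k = π k (mdpTraj f K x (feedbackActions f K x π v) v k) := by
  rw [mdpTraj_feedbackActions, feedbackActions]

end Feedback

lemma isLUB_range_sum_mdpTraj {X A V : Type*} (f : X → A → V → X) (K : ℕ) (x : X)
    (v : Fin K → V) {r : Fin K → X → A → ℝ} {c : Fin K → ℝ}
    (hr : ∀ k y, IsLUB (Set.range (r k y)) (c k)) :
    IsLUB (Set.range fun a : Fin K → A ↦ ∑ k, r k (mdpTraj f K x a v k) (a k)) (∑ k, c k) := by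
  refine ⟨?_, fun b hb ↦ le_of_forall_pos_le_add fun ε hε ↦ ?_⟩
  · rintro _ ⟨a, rfl⟩
    exact Finset.sum_le_sum fun k _ ↦ (hr k _).1 ⟨a k, rfl⟩
  · obtain ⟨δ, hδ, hKδ⟩ := exists_pos_mul_lt hε (K : ℝ)
    have exists_near_optimal (k : Fin K) (y : X) : ∃ a, c k - δ < r k y a := by
      obtain ⟨_, ⟨a, rfl⟩, ha, -⟩ := (hr k y).exists_between (sub_lt_self _ hδ)
      exact ⟨a, ha⟩
    choose π hπ using exists_near_optimal
    let a := feedbackActions f K x π v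
    have ha : ∀ k, a k = π k (mdpTraj f K x a v k) := feedbackActions_eq_policy_mdpTraj f K x π v
    calc ∑ k, c k = ∑ k, (c k - δ) + K * δ := by simp [Finset.sum_sub_distrib]
      _ ≤ ∑ k, r k (mdpTraj f K x a v k) (a k) + K * δ := by
        gcongr with k
        rw [ha]
        exact (hπ k _).le
      _ ≤ b + ε := add_le_add (hb ⟨a, rfl⟩) hKδ.le

section Advantage

variable {X A V : Type*} [MeasurableSpace V] (f : X → A → V → X) (g : ℕ → X → A → ℝ)
  (W : ℕ → X → ℝ) (μ : Measure V)

/-- The advantage of the action `a` at time `k` in the state `y`, in the sense of reinforcement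
learning: its `Q`-value minus the value of the state, with `W` as value function. It measures how
far the action is from being greedy. -/
noncomputable def advantage (k : ℕ) (y : X) (a : A) : ℝ :=
  g k y a + ∫ v', W (k + 1) (f y a v') ∂μ - W k y

lemma mdpReward_sub_MstarPenalty_eq_add_sum_advantage (K : ℕ) (x : X) (a : Fin K → A)
    (v : Fin K → V) :
    mdpReward f K g (W K) x a v - MstarPenalty f K W μ x a v =
      W 0 x + ∑ k : Fin K, advantage f g W μ k (mdpTraj f K x a v k) (a k) := by
  have telescope :
      ∑ k : Fin K, (W (k + 1) (mdpTraj f K x a v (k + 1)) - W k (mdpTraj f K x a v k)) =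
        W K (mdpTraj f K x a v K) - W 0 x := by
    rw [Fin.sum_univ_eq_sum_range
        (fun k ↦ W (k + 1) (mdpTraj f K x a v (k + 1)) - W k (mdpTraj f K x a v k)),
      Finset.sum_range_sub (fun k ↦ W k (mdpTraj f K x a v k)), mdpTraj]
  simp only [mdpReward, MstarPenalty, advantage, Finset.sum_sub_distrib, Finset.sum_add_distrib]
    at telescope ⊢
  linarith

variable {f g W μ}

lemma isLUB_range_mdpReward_sub_MstarPenalty {K : ℕ}
    (hadv : ∀ (k : Fin K) y, IsLUB (Set.range (advantage f g W μ k y)) 0)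
    (x : X) (v : Fin K → V) :
    IsLUB (Set.range fun a : Fin K → A ↦
      mdpReward f K g (W K) x a v - MstarPenalty f K W μ x a v) (W 0 x) := by
  have hsum := isLUB_range_sum_mdpTraj f K x v hadv
  have hshift := (OrderIso.addLeft (W 0 x)).isLUB_image'.2 hsum
  simpa [← Set.range_comp, Function.comp_def,
    mdpReward_sub_MstarPenalty_eq_add_sum_advantage] using hshift

lemma isLUB_range_advantage [Nonempty A] {k : ℕ} {y : X}
    (hbdd : BddAbove (Set.range fun a ↦ g k y a + ∫ v', W (k + 1) (f y a v') ∂μ))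
    (hBellman : W k y = ⨆ a, (g k y a + ∫ v', W (k + 1) (f y a v') ∂μ)) :
    IsLUB (Set.range (advantage f g W μ k y)) 0 := by
  unfold advantage
  have hlub := (OrderIso.subRight (W k y)).isLUB_image'.2 (isLUB_ciSup hbdd)
  simpa [← Set.range_comp, Function.comp_def, ← hBellman] using hlub

end Advantage

lemma integrable_comp_of_bounded {X V : Type*} [MeasurableSpace X] [MeasurableSpace V]
    (μ : Measure V) [IsFiniteMeasure μ] {φ : V → X} (hφ : Measurable φ) {h : X → ℝ}
    (hh : Measurable h) {D : ℝ} (hD : ∀ y, |h y| ≤ D) : Integrable (fun v ↦ h (φ v)) μ :=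
  .of_bound (hh.comp hφ).aestronglyMeasurable D (ae_of_all μ fun v ↦ hD (φ v))

lemma bddAbove_range_add_integral {A V : Type*} [MeasurableSpace V] {μ : Measure V}
    [IsFiniteMeasure μ] {g : A → ℝ} {h : A → V → ℝ} (hint : ∀ a, Integrable (h a) μ)
    (hg : BddAbove (Set.range g)) {D : ℝ} (hD : ∀ a v, h a v ≤ D) :
    BddAbove (Set.range fun a ↦ g a + ∫ v, h a v ∂μ) := by
  have hbdd : BddAbove (Set.range fun a ↦ ∫ v, h a v ∂μ) := by
    refine ⟨∫ _, D ∂μ, ?_⟩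
    rintro _ ⟨a, rfl⟩
    exact integral_mono (hint a) (integrable_const D) (hD a)
  exact hg.range_add hbdd

theorem mdp_strong_duality_general
    {X A V : Type*} [MeasurableSpace V] [Nonempty A]
    (μ : Measure V) [IsFiniteMeasure μ] (K : ℕ) (f : X → A → V → X)
    (g : ℕ → X → A → ℝ) (hgbd : ∀ k < K, ∀ x, BddAbove (Set.range (g k x)))
    (Λ : X → ℝ) (W : ℕ → X → ℝ)
    (hWint : ∀ k < K, ∀ x a, Integrable (fun v' ↦ W (k + 1) (f x a v')) μ)
    (hWbd : ∀ k < K, BddAbove (Set.range (W (k + 1))))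
    (hWK : ∀ x, W K x = Λ x)
    (hBellman : ∀ k < K, ∀ x : X,
      W k x = ⨆ a : A, (g k x a + ∫ v', W (k + 1) (f x a v') ∂μ))
    (x : X) (v : Fin K → V) :
    IsLUB (Set.range fun a : Fin K → A ↦
      mdpReward f K g Λ x a v - MstarPenalty f K W μ x a v) (W 0 x) := by
  obtain rfl : W K = Λ := funext hWK
  refine isLUB_range_mdpReward_sub_MstarPenalty (fun k y ↦ ?_) x v
  obtain ⟨D, hD⟩ := hWbd k k.2
  have hbdd := bddAbove_range_add_integral (hWint k k.2 y) (hgbd k k.2 y)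
    fun a v' ↦ hD ⟨f y a v', rfl⟩
  exact isLUB_range_advantage hbdd (hBellman k k.2 y)

/-- **Strong duality for finite-horizon Markov decision processes** (Theorem 1(b)).
If the bounded measurable functions `W_0, …, W_K` satisfy the Bellman recursion
`W_K = Λ` and `W_k(x) = sup_{a ∈ 𝒜} { g_k(x,a) + ∫ W_{k+1}(f(x,a,v')) μ(dv') }` for `k < K`,
and `M*` is the value-function-based penalty, then for every initial state `x`, the
expectation under the product noise law `μ^{⊗K}` of the optimal value of the inner
optimization problem equals the dynamic-programming value:
`𝔼_{v ∼ μ^{⊗K}}[ sup_{a ∈ 𝒜^K} ( Σ_k g_k(x_k,a_k) + Λ(x_K) - M*(a,v) ) ] = W_0(x)`. -/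
theorem mdp_strong_duality
    {X A V : Type*} [MeasurableSpace X] [MeasurableSpace A] [MeasurableSpace V]
    [Nonempty A]
    (μ : Measure V) [IsProbabilityMeasure μ]
    (K : ℕ) (hK : 1 ≤ K)
    (f : X → A → V → X) (hf : Measurable fun q : X × A × V => f q.1 q.2.1 q.2.2)
    (g : ℕ → X → A → ℝ) (hg : ∀ k, Measurable fun q : X × A => g k q.1 q.2)
    (hgbd : ∃ C, ∀ k x a, |g k x a| ≤ C)
    (Λ : X → ℝ) (hΛ : Measurable Λ) (hΛbd : ∃ C, ∀ x, |Λ x| ≤ C)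
    (W : ℕ → X → ℝ) (hWmeas : ∀ k, Measurable (W k)) (hWbd : ∃ C, ∀ k x, |W k x| ≤ C)
    (hWK : ∀ x, W K x = Λ x)
    (hBellman : ∀ k < K, ∀ x : X,
      W k x = ⨆ a : A, (g k x a + ∫ v', W (k + 1) (f x a v') ∂μ)) :
    ∀ x : X,
      (∫ v, (⨆ a : Fin K → A,
          (mdpReward f K g Λ x a v - MstarPenalty f K W μ x a v))
        ∂(Measure.pi fun _ : Fin K => μ)) = W 0 x := by
  intro x
  obtain ⟨C, hC⟩ := hgbd
  obtain ⟨D, hD⟩ := hWbd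
  have hg_above (k : ℕ) (y : X) : BddAbove (Set.range (g k y)) :=
    ⟨C, Set.forall_mem_range.2 fun a ↦ le_of_abs_le (hC k y a)⟩
  have hW_above (k : ℕ) : BddAbove (Set.range (W k)) :=
    ⟨D, Set.forall_mem_range.2 fun y ↦ le_of_abs_le (hD k y)⟩
  have hW_integrable (k : ℕ) (y : X) (a : A) :=
    integrable_comp_of_bounded μ (hf.comp (by fun_prop : Measurable fun v' ↦ (y, a, v')))
      (hWmeas (k + 1)) (hD (k + 1))
  have inner_value (v : Fin K → V) := (mdp_strong_duality_general μ K f g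
    (fun k _ ↦ hg_above k) Λ W (fun k _ ↦ hW_integrable k) (fun k _ ↦ hW_above (k + 1))
    hWK hBellman x v).ciSup_eq
  simp only [inner_value, integral_const, probReal_univ, one_smul]
end
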